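/- Let L be the extension of DataLTL by the additional formation rule φ ::= ρ U_@ (@ ∧ τ), where ρ and τ range over position formulas (formulas containing none of the class operators X⁼, Y⁼, U⁼, S⁼ and no U_@), with semantics: w, i ⊨ ρ U_@ (@ ∧ τ) iff there exists j ≥ i with d j = d i, w, j ⊨ τ, and w, k ⊨ ρ for all k with i ≤ k < j. Then satisfiability of L-formulas over infinite 1-attributed words is undecidable: there is no computable function f from L-formulas to Bool such that f(φ) = true if and only if φ is satisfiable over infinite 1-attributed words. -/

import Mathlib

/-!
STATEMENT 1: Satisfiability of the extension `L` of DataLTL by the rule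
φ ::= ρ U_@ (@ ∧ τ) (with ρ, τ position formulas) is undecidable over
infinite 1-attributed words.
-/

namespace Stmt1

/-- Position formulas: no class operators and no `U_@`.
Atomic propositions are identified with natural numbers. -/
inductive PosFormula : Type where
  | atom : ℕ → PosFormula
  | neg  : PosFormula → PosFormula
  | or   : PosFormula → PosFormula → PosFormula
  | X    : PosFormula → PosFormula
  | Y    : PosFormula → PosFormula
  | U    : PosFormula → PosFormula → PosFormula
  | S    : PosFormula → PosFormula → PosFormula

/-- Formulas of the logic `L`: full DataLTL, plus the additional rule
`uat ρ τ` representing ρ U_@ (@ ∧ τ) where ρ, τ are position formulas. -/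
inductive LFormula : Type where
  | atom : ℕ → LFormula
  | neg  : LFormula → LFormula
  | or   : LFormula → LFormula → LFormula
  | X    : LFormula → LFormula
  | Y    : LFormula → LFormula
  | U    : LFormula → LFormula → LFormula
  | S    : LFormula → LFormula → LFormula
  | Xeq  : LFormula → LFormula
  | Yeq  : LFormula → LFormula
  | Ueq  : LFormula → LFormula → LFormula
  | Seq  : LFormula → LFormula → LFormula
  | uat  : PosFormula → PosFormula → LFormula

/-- An infinite 1-attributed word: a labeling with sets of atomic
propositions, and a data value at each position. -/
structure Word : Type where
  lab : ℕ → Set ℕ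
  d : ℕ → ℕ

/-- Satisfaction for position formulas on infinite 1-attributed words. -/
def satP (w : Word) : ℕ → PosFormula → Prop
  | i, .atom p => p ∈ w.lab i
  | i, .neg φ => ¬ satP w i φ
  | i, .or φ ψ => satP w i φ ∨ satP w i ψ
  | i, .X φ => satP w (i + 1) φ
  | i, .Y φ => 0 < i ∧ satP w (i - 1) φ
  | i, .U φ ψ => ∃ j : ℕ, i ≤ j ∧ satP w j ψ ∧
      ∀ k : ℕ, i ≤ k → k < j → satP w k φ
  | i, .S φ ψ => ∃ j : ℕ, j ≤ i ∧ satP w j ψ ∧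
      ∀ k : ℕ, j < k → k ≤ i → satP w k φ

/-- Satisfaction for `L`-formulas on infinite 1-attributed words. -/
def satL (w : Word) : ℕ → LFormula → Prop
  | i, .atom p => p ∈ w.lab i
  | i, .neg φ => ¬ satL w i φ
  | i, .or φ ψ => satL w i φ ∨ satL w i ψ
  | i, .X φ => satL w (i + 1) φ
  | i, .Y φ => 0 < i ∧ satL w (i - 1) φ
  | i, .U φ ψ => ∃ j : ℕ, i ≤ j ∧ satL w j ψ ∧
      ∀ k : ℕ, i ≤ k → k < j → satL w k φ
  | i, .S φ ψ => ∃ j : ℕ, j ≤ i ∧ satL w j ψ ∧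
      ∀ k : ℕ, j < k → k ≤ i → satL w k φ
  | i, .Xeq φ => ∃ j : ℕ, i < j ∧ w.d j = w.d i ∧
      (∀ k : ℕ, i < k → w.d k = w.d i → j ≤ k) ∧ satL w j φ
  | i, .Yeq φ => ∃ j : ℕ, j < i ∧ w.d j = w.d i ∧
      (∀ k : ℕ, k < i → w.d k = w.d i → k ≤ j) ∧ satL w j φ
  | i, .Ueq φ ψ => ∃ j : ℕ, i ≤ j ∧ w.d j = w.d i ∧ satL w j ψ ∧
      ∀ k : ℕ, i ≤ k → k < j → w.d k = w.d i → satL w k φ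
  | i, .Seq φ ψ => ∃ j : ℕ, j ≤ i ∧ w.d j = w.d i ∧ satL w j ψ ∧
      ∀ k : ℕ, j < k → k ≤ i → w.d k = w.d i → satL w k φ
  | i, .uat ρ τ => ∃ j : ℕ, i ≤ j ∧ w.d j = w.d i ∧ satP w j τ ∧
      ∀ k : ℕ, i ≤ k → k < j → satP w k ρ

/-- Satisfiability over infinite 1-attributed words. -/
def Satisfiable (φ : LFormula) : Prop :=
  ∃ w : Word, satL w 0 φ

/-- An (injective) Gödel encoding of position formulas. -/
def encodeP : PosFormula → ℕ
  | .atom p => Nat.pair 0 p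
  | .neg φ => Nat.pair 1 (encodeP φ)
  | .or φ ψ => Nat.pair 2 (Nat.pair (encodeP φ) (encodeP ψ))
  | .X φ => Nat.pair 3 (encodeP φ)
  | .Y φ => Nat.pair 4 (encodeP φ)
  | .U φ ψ => Nat.pair 5 (Nat.pair (encodeP φ) (encodeP ψ))
  | .S φ ψ => Nat.pair 6 (Nat.pair (encodeP φ) (encodeP ψ))

/-- An (injective) Gödel encoding of `L`-formulas. -/
def encodeL : LFormula → ℕ
  | .atom p => Nat.pair 0 p
  | .neg φ => Nat.pair 1 (encodeL φ)
  | .or φ ψ => Nat.pair 2 (Nat.pair (encodeL φ) (encodeL ψ))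
  | .X φ => Nat.pair 3 (encodeL φ)
  | .Y φ => Nat.pair 4 (encodeL φ)
  | .U φ ψ => Nat.pair 5 (Nat.pair (encodeL φ) (encodeL ψ))
  | .S φ ψ => Nat.pair 6 (Nat.pair (encodeL φ) (encodeL ψ))
  | .Xeq φ => Nat.pair 7 (encodeL φ)
  | .Yeq φ => Nat.pair 8 (encodeL φ)
  | .Ueq φ ψ => Nat.pair 9 (Nat.pair (encodeL φ) (encodeL ψ))
  | .Seq φ ψ => Nat.pair 10 (Nat.pair (encodeL φ) (encodeL ψ))
  | .uat ρ τ => Nat.pair 11 (Nat.pair (encodeP ρ) (encodeP τ))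


/-- Loop programs over natural number registers. -/
inductive W : Type where
  | nop : W
  | inc : ℕ → W
  | seq : W → W → W
  | loop : ℕ → W → W
deriving Encodable, DecidableEq

/-- Register contents. -/
abbrev Store := ℕ → ℕ

/-- Big-step semantics. -/
inductive Exec : W → Store → Store → Prop
  | nop (s) : Exec W.nop s s
  | inc (c s) : Exec (W.inc c) s (Function.update s c (s c + 1))
  | seq {P Q s t u} : Exec P s t → Exec Q t u → Exec (W.seq P Q) s u
  | loop0 {c P s} : s c = 0 → Exec (W.loop c P) s s
  | loopS {c P s t u} : s c ≠ 0 → Exec P (Function.update s c (s c - 1)) t →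
      Exec (W.loop c P) t u → Exec (W.loop c P) s u

theorem Exec.det {P s t} (h : Exec P s t) : ∀ {t'}, Exec P s t' → t = t' := by
  induction h with
  | nop s => intro t' h; cases h; rfl
  | inc c s => intro t' h; cases h; rfl
  | seq _ _ ih1 ih2 =>
    intro t' h
    cases h with
    | seq a b => have := ih1 a; subst this; exact ih2 b
  | loop0 h0 =>
    intro t' h
    cases h with
    | loop0 _ => rfl
    | loopS a _ _ => exact absurd h0 a
  | loopS h0 _ _ ih1 ih2 =>
    intro t' h
    cases h with
    | loop0 a => exact absurd a h0
    | loopS _ b c => have := ih1 b; subst this; exact ih2 c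

theorem exec_loop (c : ℕ) (P : W) (F : ℕ → Store) (h0 : F 0 c = 0) : ∀ k : ℕ,
    (∀ j < k, F (j+1) c ≠ 0 ∧ Exec P (Function.update (F (j+1)) c (F (j+1) c - 1)) (F j)) →
    Exec (W.loop c P) (F k) (F 0) := by
  intro k
  induction k with
  | zero => intro _; exact Exec.loop0 h0
  | succ k ih =>
    intro h
    exact Exec.loopS (h k (by omega)).1 (h k (by omega)).2 (ih fun j hj => h j (by omega))

theorem Exec.cast {P s t t'} (h : Exec P s t) (e : t = t') : Exec P s t' := e ▸ h

theorem Exec.cast' {P s s' t} (h : Exec P s t) (e : s = s') : Exec P s' t := e ▸ h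

theorem exec_inc {c : ℕ} {s t : Store} (h : t = Function.update s c (s c + 1)) :
    Exec (W.inc c) s t := h ▸ Exec.inc c s

/-- Set a register to zero. -/
def clear (r : ℕ) : W := W.loop r W.nop

theorem exec_clear (r : ℕ) (s : Store) : Exec (clear r) s (Function.update s r 0) := by
  have := exec_loop r W.nop (fun k => Function.update s r k) (by simp) (s r) (by
    intro j _
    simp
    exact Exec.nop _)
  simpa [clear] using this

/-- Move register `a` to register `o` (additively). -/
def move (a o : ℕ) : W := W.loop a (W.inc o)

theorem exec_move {a o : ℕ} (h : a ≠ o) (s : Store) :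
    Exec (move a o) s (Function.update (Function.update s a 0) o (s o + s a)) := by
  have := exec_loop a (W.inc o)
    (fun k => Function.update (Function.update s a k) o (s o + (s a - k))) (by simp [h]) (s a) (by
    intro j hj
    refine ⟨by simp [h], ?_⟩
    apply exec_inc
    funext r
    simp only [Function.update_apply]
    grind)
  refine (this.cast' ?_).cast ?_
  · funext r; simp only [Function.update_apply]; grind
  · funext r; simp only [Function.update_apply]; grind

/-- Copy register `a` to register `o` (additively) via the empty register `t`. -/
def copy (a o t : ℕ) : W := W.seq (W.loop a (W.seq (W.inc o) (W.inc t))) (move t a)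

theorem exec_copy {a o t : ℕ} (h : a ≠ o) (h1 : a ≠ t) (h2 : o ≠ t) (s : Store) (ht : s t = 0) :
    Exec (copy a o t) s (Function.update s o (s o + s a)) := by
  have := exec_loop a (W.seq (W.inc o) (W.inc t))
    (fun k => Function.update (Function.update (Function.update s a k) o (s o + (s a - k)))
      t (s a - k)) (by simp [h, h1]) (s a) (by
    intro j hj
    refine ⟨by simp [h, h1], ?_⟩
    refine Exec.seq (Exec.inc _ _) ?_
    apply exec_inc
    funext r
    simp only [Function.update_apply]
    grind)
  refine Exec.seq (this.cast' ?_) ((exec_move h1.symm _).cast ?_)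
  · funext r; simp only [Function.update_apply]; grind
  · funext r; simp only [Function.update_apply]; grind

/-- `f` is computed by a loop program, uniformly in the placement of registers. -/
def Impl {n : ℕ} (f : List.Vector ℕ n →. ℕ) : Prop :=
  ∀ (ins : Fin n → ℕ) (o b : ℕ), (∀ i, ins i < b) → o < b → (∀ i, ins i ≠ o) →
    ∃ P, ∀ s : Store, (∀ r, b ≤ r → s r = 0) → s o = 0 →
      (∀ y ∈ f (List.Vector.ofFn fun i => s (ins i)), Exec P s (Function.update s o y)) ∧
      (∀ s', Exec P s s' → (f (List.Vector.ofFn fun i => s (ins i))).Dom)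

theorem impl_total {n : ℕ} (f : List.Vector ℕ n → ℕ)
    (h : ∀ (ins : Fin n → ℕ) (o b : ℕ), (∀ i, ins i < b) → o < b → (∀ i, ins i ≠ o) →
    ∃ P, ∀ s : Store, (∀ r, b ≤ r → s r = 0) → s o = 0 →
      Exec P s (Function.update s o (f (List.Vector.ofFn fun i => s (ins i))))) :
    Impl (fun v => Part.some (f v)) := by
  intro ins o b h1 h2 h3
  obtain ⟨P, hP⟩ := h ins o b h1 h2 h3
  refine ⟨P, fun s hs ho => ⟨?_, fun _ _ => trivial⟩⟩
  intro y hy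
  rw [Part.mem_some_iff] at hy
  exact hy ▸ hP s hs ho

theorem Impl.total {n : ℕ} {f : List.Vector ℕ n → ℕ} (h : Impl (fun v => Part.some (f v))) :
    ∀ (ins : Fin n → ℕ) (o b : ℕ), (∀ i, ins i < b) → o < b → (∀ i, ins i ≠ o) →
    ∃ P, ∀ s : Store, (∀ r, b ≤ r → s r = 0) → s o = 0 →
      Exec P s (Function.update s o (f (List.Vector.ofFn fun i => s (ins i)))) := by
  intro ins o b h1 h2 h3
  obtain ⟨P, hP⟩ := h ins o b h1 h2 h3
  exact ⟨P, fun s hs ho => (hP s hs ho).1 _ (Part.mem_some _)⟩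

theorem impl_zero : Impl (fun _ : List.Vector ℕ 0 => Part.some 0) := by
  apply impl_total (fun _ : List.Vector ℕ 0 => 0)
  intro ins o b _ _ _
  refine ⟨W.nop, fun s _ ho => (Exec.nop s).cast ?_⟩
  funext r; simp only [Function.update_apply]; grind

theorem impl_get {n : ℕ} (i : Fin n) : Impl (fun v : List.Vector ℕ n => Part.some (v.get i)) := by
  apply impl_total (fun v : List.Vector ℕ n => v.get i)
  intro ins o b h1 h2 h3
  refine ⟨copy (ins i) o b, fun s hs ho =>
    (exec_copy (h3 i) (h1 i).ne h2.ne s (hs b le_rfl)).cast ?_⟩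
  simp [ho]

theorem impl_succ : Impl (fun v : List.Vector ℕ 1 => Part.some (Nat.succ v.head)) := by
  apply impl_total (fun v : List.Vector ℕ 1 => Nat.succ v.head)
  intro ins o b h1 h2 h3
  refine ⟨W.seq (copy (ins 0) o b) (W.inc o), fun s hs ho =>
    Exec.seq (exec_copy (h3 0) (h1 0).ne h2.ne s (hs b le_rfl)) (exec_inc ?_)⟩
  simp [ho]

theorem impl_prec {n : ℕ} {f : List.Vector ℕ n → ℕ} {g : List.Vector ℕ (n+2) → ℕ}
    (hf : Impl (fun v => Part.some (f v))) (hg : Impl (fun v => Part.some (g v))) :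
    Impl (fun v : List.Vector ℕ (n+1) => Part.some
      (v.head.rec (f v.tail) fun y IH => g (y ::ᵥ IH ::ᵥ v.tail) : ℕ)) := by
  apply impl_total (fun v : List.Vector ℕ (n+1) =>
      (v.head.rec (f v.tail) fun y IH => g (y ::ᵥ IH ::ᵥ v.tail) : ℕ))
  intro ins o b h1 h2 h3
  obtain ⟨Pf, hPf⟩ := hf.total (fun i => ins i.succ) b (b+5)
    (fun i => by have := h1 i.succ; omega) (by omega) (fun i => (h1 i.succ).ne)
  obtain ⟨Pg, hPg⟩ := hg.total (Fin.cons (b+1) (Fin.cons b (fun i => ins i.succ))) (b+3) (b+5)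
    (by
      intro i
      refine Fin.cases ?_ (fun i => Fin.cases ?_ (fun i => ?_) i) i
      · simp
      · simp
      · have := h1 i.succ; simp; omega)
    (by omega)
    (by
      intro i
      refine Fin.cases ?_ (fun i => Fin.cases ?_ (fun i => ?_) i) i
      · simp
      · simp
      · have := h1 i.succ; simp; omega)
  refine ⟨W.seq Pf (W.seq (copy (ins 0) (b+2) (b+4)) (W.seq
    (W.loop (b+2) (W.seq Pg (W.seq (clear b) (W.seq (move (b+3) b) (W.inc (b+1))))))
    (W.seq (move b o) (clear (b+1))))), ?_⟩
  intro s hs ho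
  set v := List.Vector.ofFn fun i => s (ins i.succ) with hv
  set R : ℕ → ℕ := fun k => Nat.rec (f v) (fun y IH => g (y ::ᵥ IH ::ᵥ v)) k with hR
  have hR' : ((List.Vector.ofFn fun i => s (ins i)).head.rec
      (f (List.Vector.ofFn fun i => s (ins i)).tail)
      fun y IH => g (y ::ᵥ IH ::ᵥ (List.Vector.ofFn fun i => s (ins i)).tail) : ℕ)
      = R (s (ins 0)) := by
    simp [hR, hv, List.Vector.ofFn]
  rw [hR']
  have hb : ∀ i, ins i ≠ b := fun i => (h1 i).ne
  set N := s (ins 0) with hN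
  -- state with `k` iterations to go
  set F : ℕ → Store := fun k => Function.update (Function.update (Function.update s b (R (N - k)))
    (b+1) (N-k)) (b+2) k with hF
  have hz : ∀ j, s (b + j) = 0 := fun j => hs _ (by omega)
  have hz0 : s b = 0 := hs _ le_rfl
  have h10 := h1 0
  refine Exec.seq (hPf s (fun r hr => hs r (by omega)) hz0) ?_
  refine Exec.seq (t := F N) ((exec_copy (by omega) (by omega) (by omega) _ ?_).cast ?_) ?_
  · simp [hz]
  · funext r
    have hR0 : R (N - N) = f v := by rw [Nat.sub_self]; rfl
    simp only [hF, hR0, Function.update_apply]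
    have := hz 1; have := hz 2
    clear_value R
    grind
  refine Exec.seq (t := F 0) (exec_loop _ _ F ?_ N ?_) ?_
  · simp [hF]
  · intro j hj
    refine ⟨by simp [hF], ?_⟩
    refine Exec.seq (hPg _ ?_ ?_) ?_
    · intro r hr
      simp only [hF, Function.update_apply]
      have := hs r (by omega)
      grind
    · simp [hF, hz]
    · have hg' : (List.Vector.ofFn fun i : Fin (n+2) =>
          Function.update (F (j+1)) (b+2) (F (j+1) (b+2) - 1)
            ((Fin.cons (b+1) (Fin.cons b (fun i => ins i.succ)) : Fin (n+2) → ℕ) i))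
          = (N - (j+1)) ::ᵥ R (N - (j+1)) ::ᵥ v := by
        simp only [List.Vector.ofFn, hv, Fin.cons_zero, Fin.cons_succ]
        congr 1
        · simp [hF]
        · congr 1
          · simp [hF]
          · congr 1
            funext i
            have := h1 i.succ
            simp only [hF, Function.update_apply]
            grind
      rw [hg']
      have hRs : g ((N - (j+1)) ::ᵥ R (N - (j+1)) ::ᵥ v) = R (N - j) := by
        have : N - j = (N - (j+1)) + 1 := by omega
        rw [this]
      rw [hRs]
      refine Exec.seq (exec_clear _ _) (Exec.seq (exec_move (by omega) _) (exec_inc ?_))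
      funext r
      have h3 := hz 3
      simp only [hF, Function.update_apply]
      grind
  · refine Exec.seq (exec_move (by omega) _) ((exec_clear _ _).cast ?_)
    funext r
    have h4 := hz 1
    have h5 := hz 2
    simp only [hF, Function.update_apply]
    grind

theorem impl_rfind {n : ℕ} {f : List.Vector ℕ (n+1) → ℕ} (hf : Impl (fun v => Part.some (f v))) :
    Impl (fun v : List.Vector ℕ n => Nat.rfind fun k => Part.some (decide (f (k ::ᵥ v) = 0))) := by
  intro ins o b h1 h2 h3
  obtain ⟨P, hP⟩ := hf.total (Fin.cons o ins) b (b+1)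
    (by
      intro i
      refine Fin.cases ?_ (fun i => ?_) i
      · simp; omega
      · have := h1 i; simp; omega) (by omega)
    (by
      intro i
      refine Fin.cases ?_ (fun i => ?_) i
      · simp; omega
      · have := h1 i; simp; omega)
  refine ⟨W.seq P (W.loop b (W.seq (clear b) (W.seq (W.inc o) P))), ?_⟩
  intro s hs ho
  set v := List.Vector.ofFn fun i => s (ins i) with hv
  have hz0 : s b = 0 := hs _ le_rfl
  have hrun : ∀ k, Exec P (Function.update s o k)
      (Function.update (Function.update s o k) b (f (k ::ᵥ v))) := by
    intro k
    refine (hP (Function.update s o k) ?_ ?_).cast ?_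
    · intro r hr
      have := hs r (by omega)
      simp only [Function.update_apply]
      grind
    · simp only [Function.update_apply]; grind
    · congr 2
      simp only [List.Vector.ofFn, hv, Fin.cons_zero, Fin.cons_succ]
      congr 1
      · simp
      · congr 1
        funext i
        have := h3 i
        simp [this]
  set G : ℕ → Store := fun k => Function.update (Function.update s o k) b (f (k ::ᵥ v)) with hG
  have hs0 : Function.update s o 0 = s := by rw [← ho]; simp
  have hstart : Exec P s (G 0) := by
    have := hrun 0
    exact this.cast' hs0
  have hbody : ∀ k, Exec (W.seq (clear b) (W.seq (W.inc o) P))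
      (Function.update (G k) b (G k b - 1)) (G (k+1)) := by
    intro k
    refine Exec.seq (exec_clear _ _) (Exec.seq (t := Function.update s o (k+1)) (exec_inc ?_)
      (hrun (k+1)))
    funext r
    simp only [hG, Function.update_apply]
    grind
  have hGb : ∀ k, G k b = f (k ::ᵥ v) := by intro k; simp [hG]
  constructor
  · intro y hy
    obtain ⟨hy1, hy2⟩ := Nat.mem_rfind.1 hy
    have hy1 : f (y ::ᵥ v) = 0 := by simpa using hy1
    have hy2 : ∀ m < y, f (m ::ᵥ v) ≠ 0 := fun m hm => by simpa using hy2 hm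
    refine Exec.seq hstart ?_
    have := exec_loop b (W.seq (clear b) (W.seq (W.inc o) P)) (fun k => G (y - k))
      (by simp [hGb, hy1]) y (by
        intro j hj
        refine ⟨by simp only [hGb]; exact hy2 _ (by omega), ?_⟩
        have h := hbody (y - (j+1))
        have e : y - (j+1) + 1 = y - j := by omega
        rwa [e] at h)
    simp only [Nat.sub_self, Nat.sub_zero] at this
    refine this.cast ?_
    funext r
    simp only [hG, Function.update_apply]
    grind
  · intro s' h
    cases h with
    | seq ha hb =>
      have := hstart.det ha
      subst this
      refine Nat.rfind_dom'.2 ?_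
      suffices H : ∀ Q t u, Exec Q t u → Q = W.loop b (W.seq (clear b) (W.seq (W.inc o) P)) →
          ∀ k, t = G k → ∃ m, f (m ::ᵥ v) = 0 by
        obtain ⟨m, hm⟩ := H _ _ _ hb rfl 0 rfl
        exact ⟨m, by simpa using hm, fun _ => trivial⟩
      intro Q t u h
      induction h with
      | nop s => intro h; cases h
      | inc c s => intro h; cases h
      | seq _ _ _ _ => intro h; cases h
      | loop0 h0 =>
        intro h k hk
        cases h
        subst hk
        exact ⟨k, by rw [← hGb]; exact h0⟩
      | loopS h0 hx hy ih1 ih2 =>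
        intro h k hk
        cases h
        subst hk
        exact ih2 rfl (k+1) ((hbody k).det hx).symm

/-- Overwrite `j` registers from `b` on. -/
def fill (s : Store) (b j : ℕ) (y : ℕ → ℕ) : Store :=
  fun r => if b ≤ r ∧ r < b + j then y (r - b) else s r

theorem exec_clearRange (b : ℕ) : ∀ j : ℕ, ∃ C, ∀ s, Exec C s (fill s b j fun _ => 0) := by
  intro j
  induction j with
  | zero => exact ⟨W.nop, fun s => (Exec.nop s).cast (by funext r; simp only [fill]; grind)⟩
  | succ j ih =>
    obtain ⟨C, hC⟩ := ih
    refine ⟨W.seq C (clear (b+j)), fun s => Exec.seq (hC s) ((exec_clear _ _).cast ?_)⟩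
    funext r
    simp only [fill, Function.update_apply]
    grind

theorem mOfFn_dom {n : ℕ} : ∀ (p : Fin n → Part ℕ), (List.Vector.mOfFn p).Dom → ∀ i, (p i).Dom := by
  induction n with
  | zero => intro p _ i; exact i.elim0
  | succ n ih =>
    intro p h i
    simp only [List.Vector.mOfFn, Part.bind_eq_bind, Part.bind_dom] at h
    obtain ⟨h0, h1, _⟩ := h
    exact Fin.cases h0 (fun i => ih _ h1 i) i

theorem mOfFn_of_mem {n : ℕ} (p : Fin n → Part ℕ) (y : Fin n → ℕ) (h : ∀ i, y i ∈ p i) :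
    List.Vector.mOfFn p = Part.some (List.Vector.ofFn y) := by
  have : p = fun i => Part.some (y i) := by
    funext i
    exact Part.eq_some_iff.2 (h i)
  rw [this, Vector.mOfFn_part_some]

theorem impl_comp {m n : ℕ} {f : List.Vector ℕ n →. ℕ} (g : Fin n → List.Vector ℕ m →. ℕ)
    (hf : Impl f) (hg : ∀ i, Impl (g i)) :
    Impl (fun v => (List.Vector.mOfFn fun i => g i v) >>= f) := by
  intro ins o b h1 h2 h3
  have hex := fun i : Fin n => hg i ins (b+i) (b+n) (fun k => by have := h1 k; omega)
    (by have := i.2; omega) (fun k => by have := h1 k; omega)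
  choose Pg hPg using hex
  obtain ⟨Pf, hPf⟩ := hf (fun i => b + i) o (b+n) (fun i => by have := i.2; omega) (by omega)
    (fun i => by omega)
  obtain ⟨C, hC⟩ := exec_clearRange b n
  have key : ∀ j ≤ n, ∃ Q, ∀ s : Store, (∀ r, b ≤ r → s r = 0) →
      (∀ y : ℕ → ℕ, (∀ i : Fin n, i.1 < j → y i ∈ g i (List.Vector.ofFn fun k => s (ins k))) →
        Exec Q s (fill s b j y)) ∧
      (∀ s', Exec Q s s' → ∀ i : Fin n, i.1 < j →
        (g i (List.Vector.ofFn fun k => s (ins k))).Dom) := by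
    intro j
    induction j with
    | zero =>
      intro _
      refine ⟨W.nop, fun s _ => ⟨fun y _ => (Exec.nop s).cast ?_, fun _ _ i hi => by omega⟩⟩
      funext r; simp only [fill]; grind
    | succ j ih =>
      intro hj
      obtain ⟨Q, hQ⟩ := ih (by omega)
      refine ⟨W.seq Q (Pg ⟨j, hj⟩), fun s hs => ?_⟩
      have hin : ∀ y, (List.Vector.ofFn fun k => fill s b j y (ins k)) =
          List.Vector.ofFn fun k => s (ins k) := by
        intro y
        congr 1
        funext k
        have := h1 k
        simp only [fill]
        grind
      have hpre1 : ∀ y, ∀ r, b + n ≤ r → fill s b j y r = 0 := by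
        intro y r hr
        have := hs r (by omega)
        simp only [fill]
        grind
      have hpre2 : ∀ y, fill s b j y (b + (⟨j, hj⟩ : Fin n).1) = 0 := by
        intro y
        have := hs (b+j) (by omega)
        simp only [fill]
        grind
      constructor
      · intro y hy
        refine Exec.seq ((hQ s hs).1 y fun i hi => hy i (by omega)) ?_
        refine ((hPg ⟨j, hj⟩ _ (hpre1 y) (hpre2 y)).1 (y j) ?_).cast ?_
        · rw [hin]; exact hy ⟨j, hj⟩ (by simp)
        · funext r
          simp only [fill, Function.update_apply]
          grind
      · intro s' h
        cases h with
        | seq ha hb =>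
          have hd := (hQ s hs).2 _ ha
          classical
          let y : ℕ → ℕ := fun k => if h : ∃ hk : k < n, k < j then
            (g ⟨k, h.1⟩ (List.Vector.ofFn fun k => s (ins k))).get (hd ⟨k, h.1⟩ h.2) else 0
          have hy : ∀ i : Fin n, i.1 < j → y i ∈ g i (List.Vector.ofFn fun k => s (ins k)) := by
            intro i hi
            have : ∃ hk : i.1 < n, i.1 < j := ⟨i.2, hi⟩
            simp only [y, dif_pos this]
            exact Part.get_mem _
          have := ((hQ s hs).1 y hy).det ha
          subst this
          have hlast := (hPg ⟨j, hj⟩ _ (hpre1 y) (hpre2 y)).2 _ hb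
          rw [hin] at hlast
          intro i hi
          by_cases hij : i.1 < j
          · exact hd i hij
          · have : i = ⟨j, hj⟩ := Fin.ext (by simp; omega)
            exact this ▸ hlast
  obtain ⟨Q, hQ⟩ := key n le_rfl
  refine ⟨W.seq Q (W.seq Pf C), fun s hs ho => ?_⟩
  have hin : ∀ y : ℕ → ℕ, (List.Vector.ofFn fun i : Fin n => fill s b n y (b + i)) =
      List.Vector.ofFn fun i : Fin n => y i := by
    intro y
    congr 1
    funext i
    have := i.2
    simp [fill]
  have hpre1 : ∀ y, ∀ r, b + n ≤ r → fill s b n y r = 0 := by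
    intro y r hr
    have := hs r (by omega)
    simp only [fill]
    grind
  have hpre2 : ∀ y, fill s b n y o = 0 := by
    intro y
    simp only [fill]
    grind
  have hval : (∀ i : Fin n, (g i (List.Vector.ofFn fun k => s (ins k))).Dom) → ∃ y : ℕ → ℕ,
      ∀ i : Fin n, y i ∈ g i (List.Vector.ofFn fun k => s (ins k)) := by
    intro hd
    refine ⟨fun k => if h : k < n then
      (g ⟨k, h⟩ (List.Vector.ofFn fun k => s (ins k))).get (hd ⟨k, h⟩) else 0, fun i => ?_⟩
    simp only [i.2, dif_pos]
    exact Part.get_mem _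
  constructor
  · intro z hz
    obtain ⟨u, hu, hz⟩ := Part.mem_bind_iff.1 hz
    obtain ⟨y, hy⟩ := hval (mOfFn_dom _ (Part.dom_iff_mem.2 ⟨u, hu⟩))
    have hz : z ∈ f (List.Vector.ofFn fun i : Fin n => y i) := by
      rw [mOfFn_of_mem _ _ hy, Part.mem_some_iff] at hu
      rwa [hu] at hz
    refine Exec.seq ((hQ s hs).1 y fun i _ => hy i) ?_
    refine Exec.seq ((hPf _ (hpre1 y) (hpre2 y)).1 z (by rw [hin]; exact hz)) ((hC _).cast ?_)
    funext r
    simp only [fill, Function.update_apply]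
    grind
  · intro s' h
    cases h with
    | seq ha hb =>
      cases hb with
      | seq hb hc =>
        obtain ⟨y, hy⟩ := hval (fun i => (hQ s hs).2 _ ha i i.2)
        have := ((hQ s hs).1 y fun i _ => hy i).det ha
        subst this
        have := (hPf _ (hpre1 y) (hpre2 y)).2 _ hb
        rw [hin] at this
        refine Part.dom_iff_mem.2 ⟨_, Part.mem_bind_iff.2
          ⟨List.Vector.ofFn fun i : Fin n => y i, ?_, Part.get_mem this⟩⟩
        rw [mOfFn_of_mem _ _ hy]
        exact Part.mem_some _

theorem impl_primrec {n : ℕ} {f : List.Vector ℕ n → ℕ} (h : Nat.Primrec' f) :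
    Impl (fun v => Part.some (f v)) := by
  induction h with
  | zero => exact impl_zero
  | succ => exact impl_succ
  | get i => exact impl_get i
  | comp g _ _ ih1 ih2 =>
    have := impl_comp _ ih1 ih2
    simpa [Vector.mOfFn_part_some] using this
  | prec _ _ ih1 ih2 => exact impl_prec ih1 ih2

theorem impl_partrec {n : ℕ} {f : List.Vector ℕ n →. ℕ} (h : Nat.Partrec' f) : Impl f := by
  induction h with
  | prim h => exact impl_primrec h
  | comp g _ _ ih1 ih2 => exact impl_comp _ ih1 ih2
  | rfind _ ih => exact impl_rfind ih

/-- A loop program whose halting problem is undecidable. -/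
theorem exists_program : ∃ P : W, ¬ ∃ f : ℕ → Bool, Computable f ∧ ∀ n : ℕ,
    (f n = true ↔ ∃ s', Exec P (Function.update (fun _ => 0) 0 n) s') := by
  have hp : Partrec fun n : ℕ => Nat.Partrec.Code.eval (Denumerable.ofNat Nat.Partrec.Code n) 0 :=
    Nat.Partrec.Code.eval_part.comp (Computable.ofNat _) (Computable.const 0)
  obtain ⟨P, hP⟩ := impl_partrec (Nat.Partrec'.part_iff₁.2 hp) (fun _ => 0) 1 2
    (by simp) (by simp) (by simp)
  refine ⟨P, fun hc => ComputablePred.halting_problem 0 ?_⟩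
  have hiff : ∀ n : ℕ, (∃ s', Exec P (Function.update (fun _ => 0) 0 n) s') ↔
      (Nat.Partrec.Code.eval (Denumerable.ofNat Nat.Partrec.Code n) 0).Dom := by
    intro n
    have := hP (Function.update (fun _ => 0) 0 n) (by
      intro r hr
      have : r ≠ 0 := by omega
      simp [this]) (by simp)
    simp only [List.Vector.head_ofFn, Function.update_self] at this
    constructor
    · rintro ⟨s', h⟩
      exact this.2 s' h
    · intro h
      obtain ⟨y, hy⟩ := Part.dom_iff_mem.1 h
      exact ⟨_, this.1 y hy⟩
  obtain ⟨f, hf, hff⟩ := hc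
  refine ComputablePred.computable_iff.2
    ⟨fun c => f (Encodable.encode c), hf.comp Computable.encode, ?_⟩
  funext c
  rw [hff, hiff, Denumerable.ofNat_encode]

/-! ### Transition systems -/

/-- Counter operations. -/
inductive Op : Type where
  | nop : Op
  | inc : ℕ → Op
  | dec : ℕ → Op
  | zero : ℕ → Op
deriving Encodable, DecidableEq

/-- Transitions between continuations. -/
abbrev Tr := List W × Op × List W

/-- Transitions of the program `P` with continuation `k`. -/
def trs : W → List W → List Tr
  | .nop, k => [(.nop :: k, .nop, k)]
  | .inc c, k => [(.inc c :: k, .inc c, k)]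
  | .seq P Q, k => (.seq P Q :: k, .nop, P :: Q :: k) :: (trs P (Q :: k) ++ trs Q k)
  | .loop c P, k => (.loop c P :: k, .zero c, k) ::
      (.loop c P :: k, .dec c, P :: .loop c P :: k) :: trs P (.loop c P :: k)

/-- Effect of an operation. -/
def Op.app : Op → Store → Store → Prop
  | .nop, s, t => t = s
  | .inc c, s, t => t = Function.update s c (s c + 1)
  | .dec c, s, t => s c ≠ 0 ∧ t = Function.update s c (s c - 1)
  | .zero c, s, t => s c = 0 ∧ t = s

/-- Runs of a transition system. -/
inductive Run (T : List Tr) : List W → Store → List Tr → List W → Store → Prop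
  | nil (q s) : Run T q s [] q s
  | cons {q o q' s s' l q'' s''} : (q, o, q') ∈ T → Op.app o s s' → Run T q' s' l q'' s'' →
      Run T q s ((q, o, q') :: l) q'' s''

theorem Run.append {T q s l q' s' l' q'' s''} (h : Run T q s l q' s')
    (h' : Run T q' s' l' q'' s'') : Run T q s (l ++ l') q'' s'' := by
  induction h with
  | nil => exact h'
  | cons a b _ ih => exact Run.cons a b (ih h')

theorem run_of_exec {T : List Tr} {P s s'} (h : Exec P s s') :
    ∀ k, (∀ t ∈ trs P k, t ∈ T) → ∃ l, Run T (P :: k) s l k s' := by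
  induction h with
  | nop s =>
    intro k hk
    exact ⟨_, Run.cons (o := .nop) (hk _ (by simp [trs])) rfl (Run.nil _ _)⟩
  | inc c s =>
    intro k hk
    exact ⟨_, Run.cons (o := .inc c) (hk _ (by simp [trs])) rfl (Run.nil _ _)⟩
  | @seq P Q s t u _ _ ih1 ih2 =>
    intro k hk
    obtain ⟨l1, h1⟩ := ih1 (Q :: k) (fun t ht => hk t (by simp [trs, ht]))
    obtain ⟨l2, h2⟩ := ih2 k (fun t ht => hk t (by simp [trs, ht]))
    exact ⟨_, Run.cons (hk (_, .nop, P :: Q :: k) (by simp [trs])) rfl (h1.append h2)⟩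
  | loop0 h0 =>
    intro k hk
    exact ⟨_, Run.cons (o := .zero _) (hk _ (by simp [trs])) ⟨h0, rfl⟩ (Run.nil _ _)⟩
  | @loopS c P s t u h0 _ _ ih1 ih2 =>
    intro k hk
    obtain ⟨l1, h1⟩ := ih1 (.loop c P :: k) (fun t ht => hk t (by simp [trs, ht]))
    obtain ⟨l2, h2⟩ := ih2 k hk
    exact ⟨_, Run.cons (o := .dec c) (hk _ (by simp [trs])) ⟨h0, rfl⟩ (h1.append h2)⟩

/-- Execution of a list of programs. -/
def ExecL : List W → Store → Store → Prop
  | [], s, u => u = s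
  | P :: k, s, u => ∃ t, Exec P s t ∧ ExecL k t u

theorem execL_of_trs (P : W) : ∀ (k : List W) (t : Tr), t ∈ trs P k → ∀ s s' u,
    Op.app t.2.1 s s' → ExecL t.2.2 s' u → ExecL t.1 s u := by
  induction P with
  | nop =>
    intro k t ht s s' u ha he
    simp only [trs, List.mem_singleton] at ht
    subst ht
    cases ha
    exact ⟨_, Exec.nop _, he⟩
  | inc c =>
    intro k t ht s s' u ha he
    simp only [trs, List.mem_singleton] at ht
    subst ht
    cases ha
    exact ⟨_, Exec.inc _ _, he⟩
  | seq P Q ih1 ih2 =>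
    intro k t ht s s' u ha he
    simp only [trs, List.mem_cons, List.mem_append] at ht
    rcases ht with rfl | ht | ht
    · cases ha
      obtain ⟨a, ha, b, hb, hc⟩ := he
      exact ⟨b, Exec.seq ha hb, hc⟩
    · exact ih1 _ t ht s s' u ha he
    · exact ih2 _ t ht s s' u ha he
  | loop c P ih =>
    intro k t ht s s' u ha he
    simp only [trs, List.mem_cons] at ht
    rcases ht with rfl | rfl | ht
    · obtain ⟨h0, rfl⟩ := ha
      exact ⟨_, Exec.loop0 h0, he⟩
    · obtain ⟨h0, rfl⟩ := ha
      obtain ⟨a, ha, b, hb, hc⟩ := he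
      exact ⟨b, Exec.loopS h0 ha hb, hc⟩
    · exact ih _ t ht s s' u ha he

theorem Run.mem {T q s l q' s'} (h : Run T q s l q' s') : ∀ t ∈ l, t ∈ T := by
  induction h with
  | nil => simp
  | cons a _ _ ih =>
    intro t ht
    rcases List.mem_cons.1 ht with rfl | ht
    · exact a
    · exact ih t ht

theorem Run.first {T q s l s'} (h : Run T q s l [] s') (hq : q ≠ []) :
    ∃ u ∈ T, l[0]? = some u ∧ u.1 = q := by
  cases h with
  | nil => exact absurd rfl hq
  | cons a _ _ => exact ⟨_, a, rfl, rfl⟩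

theorem Run.next {T q s l q' s'} (h : Run T q s l q' s') : q' = [] → ∀ (j : ℕ) (t : Tr),
    l[j]? = some t → t.2.2 ≠ [] → ∃ u ∈ T, l[j+1]? = some u ∧ u.1 = t.2.2 := by
  induction h with
  | nil => simp
  | cons a _ h ih =>
    intro hq j t hj ht
    subst hq
    cases j with
    | zero =>
      simp only [List.getElem?_cons_zero, Option.some.injEq] at hj
      subst hj
      simpa using h.first ht
    | succ j =>
      simpa using ih rfl j t (by simpa using hj) ht

theorem Run.last {T q s l q' s'} (h : Run T q s l q' s') : q' = [] → q ≠ [] →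
    ∃ (j : ℕ) (t : Tr), l[j]? = some t ∧ t ∈ T ∧ t.2.2 = [] := by
  induction h with
  | nil => intro h h'; exact absurd h h'
  | @cons q o q' s s' l q'' s'' a _ _ ih =>
    intro hq _
    by_cases h : q' = []
    · exact ⟨0, _, rfl, a, h⟩
    · obtain ⟨j, t, h1, h2⟩ := ih hq h
      exact ⟨j+1, t, by simpa using h1, h2⟩

/-- The operation at position `i` of a list of transitions. -/
def opOf (L : List Tr) (i : ℕ) : Op :=
  match L[i]? with
  | some t => t.2.1
  | none => .nop

/-- `L` can be executed from `s0`. -/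
def StoreSeq (L : List Tr) (s0 : Store) : Prop :=
  ∃ s : ℕ → Store, s 0 = s0 ∧ ∀ i, Op.app (opOf L i) (s i) (s (i+1))

theorem storeSeq_nil (s : Store) : StoreSeq [] s :=
  ⟨fun _ => s, rfl, fun _ => rfl⟩

theorem storeSeq_cons {t : Tr} {L : List Tr} {s s' : Store} (h : Op.app t.2.1 s s')
    (h' : StoreSeq L s') : StoreSeq (t :: L) s := by
  obtain ⟨f, h0, hf⟩ := h'
  refine ⟨fun i => Nat.casesOn i s f, rfl, ?_⟩
  intro i
  cases i with
  | zero => simpa [opOf, h0] using h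
  | succ i => simpa [opOf] using hf i

theorem Run.storeSeq {T q s l q' s'} (h : Run T q s l q' s') : StoreSeq l s := by
  induction h with
  | nil => exact storeSeq_nil _
  | cons _ b _ ih => exact storeSeq_cons b ih

/-! ### Counting -/

open Classical in
theorem count_of_word (I D Z : ℕ → Prop) (d : ℕ → ℕ)
    (hID : ∀ i, I i → D i → False) (hDZ : ∀ i, D i → Z i → False)
    (h1 : ∀ j, D j → ∃ i < j, d i = d j ∧ (∀ k < j, d k = d j → k ≤ i) ∧ I i)
    (h2 : ∀ i, I i → (∀ z, i ≤ z → ¬ Z z) ∨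
      ((∃ j, i < j ∧ d j = d i ∧ (∀ k, i < k → d k = d i → j ≤ k) ∧ D j) ∧
        ∃ j, i ≤ j ∧ d j = d i ∧ D j ∧ ∀ k, i ≤ k → k < j → ¬ Z k)) :
    (∀ i, Nat.count D i ≤ Nat.count I i) ∧ (∀ i, D i → Nat.count D i < Nat.count I i) ∧
    (∀ z, Z z → Nat.count I z ≤ Nat.count D z) := by
  have a : ∀ i, Nat.count D i ≤ Nat.count I i := by
    intro n
    choose! p hp using h1
    rw [Nat.count_eq_card_filter_range, Nat.count_eq_card_filter_range]
    refine Finset.card_le_card_of_injOn p ?_ ?_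
    · intro j hj
      simp only [Finset.coe_filter, Finset.mem_range, Set.mem_ofPred_eq] at hj ⊢
      obtain ⟨q1, q2, q3, q4⟩ := hp j hj.2
      exact ⟨by omega, q4⟩
    · intro j hj j' hj' hjj
      simp only [Finset.coe_filter, Finset.mem_range, Set.mem_ofPred_eq] at hj hj'
      obtain ⟨q1, q2, q3, q4⟩ := hp j hj.2
      obtain ⟨r1, r2, r3, r4⟩ := hp j' hj'.2
      rcases lt_trichotomy j j' with h | h | h
      · have := r3 j h (by rw [← q2, hjj, r2]); omega
      · exact h
      · have := q3 j' h (by rw [← r2, ← hjj, q2]); omega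
  refine ⟨a, ?_, ?_⟩
  · intro i hi
    have := a (i+1)
    have hI : ¬ I i := fun h => hID i h hi
    simp only [Nat.count_succ, hi, hI, if_true, if_false] at this
    omega
  · intro z hz
    have h3 : ∀ i, I i ∧ i < z → ∃ j, i < j ∧ d j = d i ∧ (∀ k, i < k → d k = d i → j ≤ k) ∧ D j
        ∧ j < z := by
      rintro i ⟨hi, hiz⟩
      rcases h2 i hi with h | ⟨⟨j, j1, j2, j3, j4⟩, j', k1, k2, k3, k4⟩
      · exact absurd hz (h z hiz.le)
      · refine ⟨j, j1, j2, j3, j4, ?_⟩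
        have hne : i ≠ j' := fun h => hID i hi (h ▸ k3)
        have hjj := j3 j' (by omega) k2
        have hzj : j' ≤ z := by
          by_contra hlt
          exact k4 z hiz.le (by omega) hz
        have : j ≠ z := fun h => hDZ j j4 (h ▸ hz)
        omega
    choose! p hp using h3
    rw [Nat.count_eq_card_filter_range, Nat.count_eq_card_filter_range]
    refine Finset.card_le_card_of_injOn p ?_ ?_
    · intro j hj
      simp only [Finset.coe_filter, Finset.mem_range, Set.mem_ofPred_eq] at hj ⊢
      obtain ⟨q1, q2, q3, q4, q5⟩ := hp j ⟨hj.2, hj.1⟩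
      exact ⟨q5, q4⟩
    · intro j hj j' hj' hjj
      simp only [Finset.coe_filter, Finset.mem_range, Set.mem_ofPred_eq] at hj hj'
      obtain ⟨q1, q2, q3, q4, q5⟩ := hp j ⟨hj.2, hj.1⟩
      obtain ⟨r1, r2, r3, r4, r5⟩ := hp j' ⟨hj'.2, hj'.1⟩
      rcases lt_trichotomy j j' with h | h | h
      · have := q3 j' h (by rw [← r2, ← hjj, q2]); omega
      · exact h
      · have := r3 j h (by rw [← q2, hjj, r2]); omega

/-- Data values realising a run. -/
def dataOf (op : ℕ → Op) (i : ℕ) : ℕ :=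
  match op i with
  | .inc c => Nat.pair (c+1) (Nat.count (fun j => op j = .inc c) i)
  | .dec c => Nat.pair (c+1) (Nat.count (fun j => op j = .dec c) i)
  | _ => 0

theorem exists_count {p : ℕ → Prop} [DecidablePred p] {k : ℕ} :
    ∀ z, k < Nat.count p z → ∃ j < z, p j ∧ Nat.count p j = k := by
  intro z
  induction z with
  | zero => simp
  | succ z ih =>
    intro h
    by_cases hk : k < Nat.count p z
    · obtain ⟨j, h1, h2⟩ := ih hk
      exact ⟨j, by omega, h2⟩
    · rw [Nat.count_succ] at h
      by_cases hp : p z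
      · simp only [hp, if_true] at h
        exact ⟨z, by omega, hp, by omega⟩
      · simp only [hp, if_false] at h
        omega

theorem dataOf_eq {op : ℕ → Op} {c n i : ℕ} (h : dataOf op i = Nat.pair (c+1) n) :
    (op i = .inc c ∧ Nat.count (fun j => op j = .inc c) i = n) ∨
    (op i = .dec c ∧ Nat.count (fun j => op j = .dec c) i = n) := by
  have h0 : (0 : ℕ) ≠ Nat.pair (c+1) n := by
    intro h
    have : Nat.pair 0 0 = Nat.pair (c+1) n := by rw [← h]; rfl
    rw [Nat.pair_eq_pair] at this
    omega
  unfold dataOf at h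
  split at h
  · rename_i c' hc
    rw [Nat.pair_eq_pair] at h
    obtain ⟨h1, h2⟩ := h
    have : c' = c := by omega
    subst this
    exact Or.inl ⟨hc, h2⟩
  · rename_i c' hc
    rw [Nat.pair_eq_pair] at h
    obtain ⟨h1, h2⟩ := h
    have : c' = c := by omega
    subst this
    exact Or.inr ⟨hc, h2⟩
  · exact absurd h h0

theorem word_of_run (op : ℕ → Op) (s : ℕ → Store) (h0 : s 0 = fun _ => 0)
    (hs : ∀ i, Op.app (op i) (s i) (s (i+1))) (c : ℕ) :
    (∀ j, op j = .dec c → ∃ i < j, dataOf op i = dataOf op j ∧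
      (∀ k < j, dataOf op k = dataOf op j → k ≤ i) ∧ op i = .inc c) ∧
    (∀ i, op i = .inc c → (∀ z, i ≤ z → ¬ op z = .zero c) ∨
      ((∃ j, i < j ∧ dataOf op j = dataOf op i ∧
        (∀ k, i < k → dataOf op k = dataOf op i → j ≤ k) ∧ op j = .dec c) ∧
        ∃ j, i ≤ j ∧ dataOf op j = dataOf op i ∧ op j = .dec c ∧
          ∀ k, i ≤ k → k < j → ¬ op k = .zero c)) := by
  set I : ℕ → Prop := fun j => op j = .inc c with hI
  set D : ℕ → Prop := fun j => op j = .dec c with hD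
  have hcnt : ∀ i, s i c + Nat.count D i = Nat.count I i := by
    intro i
    induction i with
    | zero => simp [h0]
    | succ i ih =>
      have h := hs i
      rw [Nat.count_succ, Nat.count_succ]
      simp only [hI, hD] at ih ⊢
      cases hop : op i with
      | nop =>
        rw [hop] at h
        simp only [Op.app] at h
        simp [h, ih]
      | zero a =>
        rw [hop] at h
        simp only [Op.app] at h
        simp [h, ih]
      | inc a =>
        rw [hop] at h
        simp only [Op.app] at h
        simp only [h, Function.update_apply, Op.inc.injEq, reduceCtorEq, if_false]
        grind
      | dec a =>
        rw [hop] at h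
        simp only [Op.app] at h
        simp only [h.2, Function.update_apply, Op.dec.injEq, reduceCtorEq, if_false]
        grind
  have hdI : ∀ i, I i → dataOf op i = Nat.pair (c+1) (Nat.count I i) := by
    intro i hi
    simp only [hI] at hi
    simp only [dataOf, hi]
    rfl
  have hdD : ∀ i, D i → dataOf op i = Nat.pair (c+1) (Nat.count D i) := by
    intro i hi
    simp only [hD] at hi
    simp only [dataOf, hi]
    rfl
  have hDlt : ∀ j, D j → Nat.count D j < Nat.count I j := by
    intro j hj
    have h := hs j
    simp only [hD] at hj
    rw [hj] at h
    have h1 := h.1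
    have := hcnt j
    omega
  constructor
  · intro j hj
    obtain ⟨i, i1, i2, i3⟩ := exists_count j (hDlt j hj)
    refine ⟨i, i1, ?_, ?_, i2⟩
    · rw [hdI i i2, hdD j hj, i3]
    · intro k hk hd
      rw [hdD j hj] at hd
      rcases dataOf_eq hd with ⟨q1, q2⟩ | ⟨q1, q2⟩
      · exact (Nat.count_injective (p := I) q1 i2 (by rw [i3]; exact q2)).le
      · exact absurd (Nat.count_injective (p := D) q1 hj q2) (by omega)
  · intro i hi
    have key : ∀ z, i ≤ z → op z = .zero c → ∃ j < z, D j ∧ Nat.count D j = Nat.count I i := by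
      intro z hiz hz
      have hne : i ≠ z := by
        rintro rfl
        simp [hz] at hi
      apply exists_count
      have h := hs z
      rw [hz] at h
      have h1 := h.1
      have := hcnt z
      have h2 : Nat.count I (i+1) ≤ Nat.count I z := Nat.count_monotone _ (by omega)
      have h3 : I i := hi
      simp only [Nat.count_succ, h3, if_true] at h2
      omega
    by_cases hz : ∀ z, i ≤ z → ¬ op z = .zero c
    · exact Or.inl hz
    · right
      push Not at hz
      obtain ⟨z, hiz, hz⟩ := hz
      obtain ⟨j, hjz, hj, hjc⟩ := key z hiz hz
      have hij : i < j := by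
        have h1 := hDlt j hj
        by_contra hle
        have : Nat.count I j ≤ Nat.count I i := Nat.count_monotone _ (by omega)
        omega
      have hde : dataOf op j = dataOf op i := by rw [hdI i hi, hdD j hj, hjc]
      refine ⟨⟨j, hij, hde, ?_, hj⟩, j, hij.le, hde, hj, ?_⟩
      · intro k hk hd
        rw [hdI i hi] at hd
        rcases dataOf_eq hd with ⟨q1, q2⟩ | ⟨q1, q2⟩
        · exact absurd (Nat.count_injective (p := I) q1 hi q2) (by omega)
        · exact (Nat.count_injective (p := D) q1 hj (by rw [hjc]; exact q2)).ge
      · intro k hk hkj hkz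
        obtain ⟨j', h1, h2, h3⟩ := key k hk hkz
        have := Nat.count_injective (p := D) h2 hj (by rw [hjc, h3])
        omega

/-! ### The formulas -/

def ltop : LFormula := .or (.atom 0) (.neg (.atom 0))
def ptop : PosFormula := .or (.atom 0) (.neg (.atom 0))
def land (φ ψ : LFormula) : LFormula := .neg (.or (.neg φ) (.neg ψ))
def limp (φ ψ : LFormula) : LFormula := .or (.neg φ) ψ
def lF (φ : LFormula) : LFormula := .U ltop φ
def lG (φ : LFormula) : LFormula := .neg (lF (.neg φ))
def conjOver {α : Type} (l : List α) (F : α → LFormula) : LFormula :=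
  l.foldr (fun a φ => land (F a) φ) ltop
/-- The atom of a transition. -/
def at' (t : Tr) : LFormula := .atom (Encodable.encode t)
def selL (l : List Tr) : LFormula := l.foldr (fun t φ => .or (at' t) φ) (.neg ltop)
def selP (l : List Tr) : PosFormula :=
  l.foldr (fun t φ => .or (.atom (Encodable.encode t)) φ) (.neg ptop)

section
variable (w : Word) (i : ℕ)

theorem sat_top : satL w i ltop := by simp [ltop, satL, em]
theorem satP_top : satP w i ptop := by simp [ptop, satP, em]
theorem sat_and (φ ψ : LFormula) : satL w i (land φ ψ) ↔ satL w i φ ∧ satL w i ψ := by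
  simp [land, satL]
theorem sat_imp (φ ψ : LFormula) : satL w i (limp φ ψ) ↔ (satL w i φ → satL w i ψ) := by
  simp [limp, satL, imp_iff_not_or]
theorem sat_F (φ : LFormula) : satL w i (lF φ) ↔ ∃ j, i ≤ j ∧ satL w j φ := by
  simp [lF, satL, sat_top]
theorem sat_G (φ : LFormula) : satL w i (lG φ) ↔ ∀ j, i ≤ j → satL w j φ := by
  simp [lG, satL, sat_F]
theorem sat_conj {α : Type} (l : List α) (F : α → LFormula) :
    satL w i (conjOver l F) ↔ ∀ a ∈ l, satL w i (F a) := by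
  induction l with
  | nil => simp [conjOver, sat_top]
  | cons a l ih =>
    have : conjOver (a :: l) F = land (F a) (conjOver l F) := rfl
    rw [this, sat_and, ih]
    simp
theorem sat_at (t : Tr) : satL w i (at' t) ↔ Encodable.encode t ∈ w.lab i := by
  simp [at', satL]
theorem sat_selL (l : List Tr) :
    satL w i (selL l) ↔ ∃ t ∈ l, Encodable.encode t ∈ w.lab i := by
  induction l with
  | nil => simp [selL, satL, sat_top]
  | cons a l ih =>
    have : selL (a :: l) = .or (at' a) (selL l) := rfl
    rw [this, satL, ih, sat_at]
    simp
theorem sat_selP (l : List Tr) :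
    satP w i (selP l) ↔ ∃ t ∈ l, Encodable.encode t ∈ w.lab i := by
  induction l with
  | nil => simp [selP, satP, satP_top]
  | cons a l ih =>
    have : selP (a :: l) = .or (.atom (Encodable.encode a)) (selP l) := rfl
    rw [this, satP, ih]
    simp [satP]
end

/-- The input transition. -/
def tau0 : Tr := ([], .inc 0, [])
/-- The transition starting the program. -/
def tau1 (P : W) : Tr := ([], .nop, [P])
/-- All transitions. -/
def allT (P : W) : List Tr := tau0 :: tau1 P :: trs P []
/-- Transitions with a given operation. -/
def opT (P : W) (o : Op) : List Tr := (allT P).filter fun t => t.2.1 = o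

/-- Exclusivity of transition labels. -/
def fExcl (P : W) : LFormula :=
  conjOver (allT P) fun t => conjOver (allT P) fun u =>
    if t = u then ltop else .neg (land (at' t) (at' u))

/-- Constraint on the data values. -/
def fBody (P : W) (o : Op) : LFormula :=
  match o with
  | .dec c => .Yeq (selL (opT P (.inc c)))
  | .inc c => .or (lG (.neg (selL (opT P (.zero c)))))
      (land (.Xeq (selL (opT P (.dec c))))
        (.uat (.neg (selP (opT P (.zero c)))) (selP (opT P (.dec c)))))
  | _ => ltop

def fData (P : W) : LFormula := conjOver (allT P) fun t => limp (at' t) (fBody P t.2.1)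

/-- Consecutive transitions fit. -/
def fNext (P : W) : LFormula := conjOver (tau1 P :: trs P []) fun t =>
  if t.2.2 = [] then ltop else
    limp (at' t) (.X (selL ((trs P []).filter fun u => u.1 = t.2.2)))

def fGlob (P : W) : LFormula := lG (land (fExcl P) (land (fData P) (fNext P)))

/-- Input and termination. -/
def fIn (P : W) : ℕ → LFormula
  | 0 => land (at' (tau1 P)) (lF (selL ((trs P []).filter fun u => u.2.2 = [])))
  | n + 1 => land (at' tau0) (.X (fIn P n))

def fAll (P : W) (n : ℕ) : LFormula := land (fGlob P) (fIn P n)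

/-- Operation at a position of a word. -/
def OpAt (P : W) (w : Word) (i : ℕ) (o : Op) : Prop :=
  ∃ t ∈ allT P, Encodable.encode t ∈ w.lab i ∧ t.2.1 = o

theorem sat_opT (P : W) (w : Word) (i : ℕ) (o : Op) :
    satL w i (selL (opT P o)) ↔ OpAt P w i o := by
  rw [sat_selL]
  simp only [opT, List.mem_filter, decide_eq_true_eq, OpAt]
  grind

theorem satP_opT (P : W) (w : Word) (i : ℕ) (o : Op) :
    satP w i (selP (opT P o)) ↔ OpAt P w i o := by
  rw [sat_selP]
  simp only [opT, List.mem_filter, decide_eq_true_eq, OpAt]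
  grind

theorem sat_fIn (P : W) (w : Word) (n : ℕ) : ∀ i, satL w i (fIn P n) ↔
    (∀ k < n, Encodable.encode tau0 ∈ w.lab (i + k)) ∧
    Encodable.encode (tau1 P) ∈ w.lab (i + n) ∧
    ∃ f, i + n ≤ f ∧ ∃ t ∈ trs P [], t.2.2 = [] ∧ Encodable.encode t ∈ w.lab f := by
  induction n with
  | zero =>
    intro i
    simp only [fIn, sat_and, sat_at, sat_F, sat_selL, List.mem_filter, decide_eq_true_eq]
    simp [and_assoc]
  | succ n ih =>
    intro i
    have e : ∀ k, i + 1 + k = i + (k + 1) := fun k => by omega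
    simp only [fIn, sat_and, sat_at, satL, ih, e]
    constructor
    · rintro ⟨h0, h1, h2⟩
      refine ⟨fun k hk => ?_, h2⟩
      cases k with
      | zero => exact h0
      | succ k => exact h1 k (by omega)
    · rintro ⟨h1, h2⟩
      exact ⟨h1 0 (by omega), fun k hk => h1 (k+1) (by omega), h2⟩

/-- What the global formula says. -/
structure Good (P : W) (w : Word) : Prop where
  excl : ∀ i, ∀ t ∈ allT P, ∀ u ∈ allT P, Encodable.encode t ∈ w.lab i →
    Encodable.encode u ∈ w.lab i → t = u
  dec : ∀ c j, OpAt P w j (.dec c) → ∃ i < j, w.d i = w.d j ∧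
    (∀ k < j, w.d k = w.d j → k ≤ i) ∧ OpAt P w i (.inc c)
  inc : ∀ c i, OpAt P w i (.inc c) → (∀ z, i ≤ z → ¬ OpAt P w z (.zero c)) ∨
    ((∃ j, i < j ∧ w.d j = w.d i ∧ (∀ k, i < k → w.d k = w.d i → j ≤ k) ∧ OpAt P w j (.dec c)) ∧
      ∃ j, i ≤ j ∧ w.d j = w.d i ∧ OpAt P w j (.dec c) ∧
        ∀ k, i ≤ k → k < j → ¬ OpAt P w k (.zero c))
  next : ∀ i, ∀ t ∈ tau1 P :: trs P [], t.2.2 ≠ [] → Encodable.encode t ∈ w.lab i →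
    ∃ u ∈ trs P [], u.1 = t.2.2 ∧ Encodable.encode u ∈ w.lab (i+1)

theorem sat_fGlob (P : W) (w : Word) : satL w 0 (fGlob P) ↔ Good P w := by
  have h1 : ∀ i, satL w i (fExcl P) ↔ ∀ t ∈ allT P, ∀ u ∈ allT P, Encodable.encode t ∈ w.lab i →
      Encodable.encode u ∈ w.lab i → t = u := by
    intro i
    simp only [fExcl, sat_conj]
    refine forall₂_congr fun t _ => forall₂_congr fun u _ => ?_
    by_cases h : t = u
    · simp [h, sat_top]
    · simp [h, satL, sat_and, sat_at]
  have h2 : ∀ i, satL w i (fData P) ↔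
      (∀ c, OpAt P w i (.dec c) → satL w i (fBody P (.dec c))) ∧
      (∀ c, OpAt P w i (.inc c) → satL w i (fBody P (.inc c))) := by
    intro i
    simp only [fData, sat_conj, sat_imp, sat_at]
    constructor
    · intro h
      constructor
      · rintro c ⟨t, h1, h2, h3⟩
        have := h t h1 h2
        rwa [h3] at this
      · rintro c ⟨t, h1, h2, h3⟩
        have := h t h1 h2
        rwa [h3] at this
    · rintro ⟨ha, hb⟩ t ht hl
      cases hop : t.2.1 with
      | nop => exact sat_top _ _
      | zero c => exact sat_top _ _
      | inc c => exact hb c ⟨t, ht, hl, hop⟩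
      | dec c => exact ha c ⟨t, ht, hl, hop⟩
  have h3 : ∀ i, satL w i (fNext P) ↔ ∀ t ∈ tau1 P :: trs P [], t.2.2 ≠ [] →
      Encodable.encode t ∈ w.lab i →
      ∃ u ∈ trs P [], u.1 = t.2.2 ∧ Encodable.encode u ∈ w.lab (i+1) := by
    intro i
    simp only [fNext, sat_conj]
    refine forall₂_congr fun t _ => ?_
    by_cases h : t.2.2 = []
    · simp [h, sat_top]
    · simp only [h, if_false, sat_imp, sat_at, satL, sat_selL, List.mem_filter,
        decide_eq_true_eq, and_assoc, ne_eq, not_false_eq_true, forall_const]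
  have h4 : ∀ i c, satL w i (fBody P (.dec c)) ↔ ∃ j < i, w.d j = w.d i ∧
      (∀ k < i, w.d k = w.d i → k ≤ j) ∧ OpAt P w j (.inc c) := by
    intro i c
    simp only [fBody, satL, sat_opT]
  have h5 : ∀ i c, satL w i (fBody P (.inc c)) ↔ (∀ z, i ≤ z → ¬ OpAt P w z (.zero c)) ∨
    ((∃ j, i < j ∧ w.d j = w.d i ∧ (∀ k, i < k → w.d k = w.d i → j ≤ k) ∧ OpAt P w j (.dec c)) ∧
      ∃ j, i ≤ j ∧ w.d j = w.d i ∧ OpAt P w j (.dec c) ∧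
        ∀ k, i ≤ k → k < j → ¬ OpAt P w k (.zero c)) := by
    intro i c
    simp only [fBody, satL, sat_opT, sat_G, sat_and, satP, satP_opT]
  simp only [fGlob, sat_G, sat_and, h1, h2, h3, h4, h5]
  constructor
  · intro h
    exact ⟨fun i => (h i (by omega)).1, fun c j => (h j (by omega)).2.1.1 c,
      fun c j => (h j (by omega)).2.1.2 c, fun i => (h i (by omega)).2.2⟩
  · intro h i _
    exact ⟨h.excl i, ⟨fun c => h.dec c i, fun c => h.inc c i⟩, h.next i⟩

theorem OpAt.unique {P w i o o'} (h : Good P w) (h1 : OpAt P w i o) (h2 : OpAt P w i o') :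
    o = o' := by
  obtain ⟨t, a1, a2, a3⟩ := h1
  obtain ⟨u, b1, b2, b3⟩ := h2
  have := h.excl i t a1 u b1 a2 b2
  rw [← a3, ← b3, this]

open Classical in
/-- Counter values read off a word. -/
noncomputable def storeAt (P : W) (w : Word) (i : ℕ) : Store := fun c =>
  Nat.count (fun j => OpAt P w j (.inc c)) i - Nat.count (fun j => OpAt P w j (.dec c)) i

open Classical in
theorem storeAt_app {P w i o} (h : Good P w) (ho : OpAt P w i o) :
    Op.app o (storeAt P w i) (storeAt P w (i+1)) := by
  have hc := fun c => count_of_word (fun j => OpAt P w j (.inc c)) (fun j => OpAt P w j (.dec c))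
    (fun j => OpAt P w j (.zero c)) w.d
    (fun i a b => by have := OpAt.unique h a b; cases this)
    (fun i a b => by have := OpAt.unique h a b; cases this)
    (h.dec c) (h.inc c)
  have hu : ∀ o', OpAt P w i o' ↔ o = o' :=
    fun o' => ⟨fun h' => OpAt.unique h ho h', fun e => e ▸ ho⟩
  have hle := fun c => (hc c).1 i
  cases o with
  | nop =>
    funext c
    simp [storeAt, Nat.count_succ, hu]
  | zero a =>
    constructor
    · have := (hc a).2.2 i ho
      simp only [storeAt]
      omega
    · funext c
      simp [storeAt, Nat.count_succ, hu]
  | inc a =>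
    funext c
    have := hle c
    simp only [storeAt, Nat.count_succ, hu, Function.update_apply, Op.inc.injEq, reduceCtorEq,
      if_false]
    by_cases hca : a = c
    · subst hca
      simp only [if_true]
      omega
    · have hca' : c ≠ a := fun h => hca h.symm
      simp [hca, hca']
  | dec a =>
    have := (hc a).2.1 i ho
    constructor
    · simp only [storeAt]
      omega
    · funext c
      simp only [storeAt, Nat.count_succ, hu, Function.update_apply, Op.dec.injEq, reduceCtorEq,
        if_false]
      by_cases hca : a = c
      · subst hca
        simp only [if_true]
        omega
      · have hca' : c ≠ a := fun h => hca h.symm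
        simp [hca, hca']

theorem exec_of_sat {P : W} {n : ℕ} (h : Satisfiable (fAll P n)) :
    ∃ s', Exec P (Function.update (fun _ => 0) 0 n) s' := by
  obtain ⟨w, hw⟩ := h
  rw [fAll, sat_and, sat_fGlob, sat_fIn] at hw
  obtain ⟨hg, h0, h1, hf⟩ := hw
  simp only [Nat.zero_add] at h0 h1 hf
  have hS : ∀ i ≤ n, storeAt P w i = Function.update (fun _ => 0) 0 i := by
    intro i
    induction i with
    | zero =>
      intro _
      funext c
      simp [storeAt, Function.update_apply]
    | succ i ih =>
      intro hi
      have : Op.app (.inc 0) _ _ := storeAt_app hg ⟨tau0, by simp [allT], h0 i (by omega), rfl⟩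
      rw [Op.app, ih (by omega)] at this
      rw [this]
      simp
  have hS1 : storeAt P w (n+1) = Function.update (fun _ => 0) 0 n := by
    have : Op.app .nop _ _ := storeAt_app hg ⟨tau1 P, by simp [allT], h1, rfl⟩
    rw [Op.app, hS n le_rfl] at this
    exact this
  have hex : ∃ f, n < f ∧ ∃ t ∈ trs P [], t.2.2 = [] ∧ Encodable.encode t ∈ w.lab f := by
    obtain ⟨f, hnf, t, ht, ht2, htl⟩ := hf
    rcases hnf.lt_or_eq with h | h
    · exact ⟨f, h, t, ht, ht2, htl⟩
    · exfalso
      subst h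
      have := hg.excl n t (by simp [allT, ht]) (tau1 P) (by simp [allT]) htl h1
      subst this
      simp [tau1] at ht2
  classical
  obtain ⟨hnf, t, ht, ht2, htl⟩ := Nat.find_spec hex
  have hmin := fun m => Nat.find_min hex (m := m)
  set f := Nat.find hex
  have key : ∀ j, n + 1 + j ≤ f → ∃ u ∈ trs P [], Encodable.encode u ∈ w.lab (n + 1 + j) ∧
      ∀ x, ExecL u.1 (storeAt P w (n + 1 + j)) x → ExecL [P] (storeAt P w (n+1)) x := by
    intro j
    induction j with
    | zero =>
      intro _
      obtain ⟨u, hu, hu1, hul⟩ := hg.next n (tau1 P) (by simp) (by simp [tau1]) h1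
      refine ⟨u, hu, hul, ?_⟩
      intro x hx
      rw [hu1] at hx
      exact hx
    | succ j ih =>
      intro hj
      obtain ⟨u, hu, hul, hux⟩ := ih (by omega)
      have hne : u.2.2 ≠ [] := fun he => hmin (n+1+j) (by omega) ⟨by omega, u, hu, he, hul⟩
      obtain ⟨v, hv, hv1, hvl⟩ := hg.next _ u (by simp [hu]) hne hul
      refine ⟨v, hv, hvl, fun x hx => hux x ?_⟩
      rw [hv1] at hx
      exact execL_of_trs P [] u hu _ _ x
        (storeAt_app hg ⟨u, by simp [allT, hu], hul, rfl⟩) hx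
  obtain ⟨u, hu, hul, hux⟩ := key (f - (n+1)) (by omega)
  have e : n + 1 + (f - (n+1)) = f := by omega
  rw [e] at hul hux
  have : u = t := hg.excl f u (by simp [allT, hu]) t (by simp [allT, ht]) hul htl
  subst this
  have := hux _ (execL_of_trs P [] u hu _ _ _
        (storeAt_app hg ⟨u, by simp [allT, hu], hul, rfl⟩) (by rw [ht2]; rfl))
  rw [hS1] at this
  obtain ⟨s', hs', _⟩ := this
  exact ⟨s', hs'⟩

theorem sat_of_exec {P : W} {n : ℕ} {s' : Store}
    (h : Exec P (Function.update (fun _ => 0) 0 n) s') : Satisfiable (fAll P n) := by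
  obtain ⟨l, hl⟩ := run_of_exec (T := trs P []) h [] (fun t ht => ht)
  set L : List Tr := List.replicate n tau0 ++ tau1 P :: l with hL
  have hL0 : ∀ i < n, L[i]? = some tau0 := by
    intro i hi
    rw [hL, List.getElem?_append_left (by simpa using hi)]
    simp [hi]
  have hL1 : ∀ j, L[n + j]? = (tau1 P :: l)[j]? := by
    intro j
    rw [hL, List.getElem?_append_right (by simp)]
    simp
  have hstore : StoreSeq L (fun _ => 0) := by
    have h1 : StoreSeq (tau1 P :: l) (Function.update (fun _ => 0) 0 n) :=
      storeSeq_cons (t := tau1 P) rfl hl.storeSeq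
    have h2 : ∀ m k, StoreSeq (tau1 P :: l) (Function.update (fun _ => 0) 0 (k + m)) →
        StoreSeq (List.replicate m tau0 ++ tau1 P :: l) (Function.update (fun _ => 0) 0 k) := by
      intro m
      induction m with
      | zero => intro k hk; simpa using hk
      | succ m ih =>
        intro k hk
        rw [List.replicate_succ, List.cons_append]
        refine storeSeq_cons (s' := Function.update (fun _ => 0) 0 (k+1)) ?_ (ih (k+1) ?_)
        · simp [tau0, Op.app]
        · rwa [show k + 1 + m = k + (m + 1) by omega]
    have := h2 n 0 (by simpa using h1)
    have e : (Function.update (fun _ => 0) 0 0 : Store) = fun _ => 0 := by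
      funext c; simp [Function.update_apply]
    rwa [e] at this
  obtain ⟨s, hs0, hs⟩ := hstore
  have hmem : ∀ (i : ℕ) (t : Tr), L[i]? = some t → t ∈ allT P := by
    intro i t ht
    have := List.mem_of_getElem? ht
    rw [hL, List.mem_append, List.mem_replicate, List.mem_cons] at this
    rcases this with h | h | h
    · simp [allT, h.2]
    · simp [allT, h]
    · have := hl.mem t h
      simp [allT, this]
  let w : Word := ⟨fun i => {p | ∃ t, L[i]? = some t ∧ p = Encodable.encode t}, dataOf (opOf L)⟩
  have hlab : ∀ i (t : Tr), Encodable.encode t ∈ w.lab i ↔ L[i]? = some t := by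
    intro i t
    constructor
    · rintro ⟨u, hu, he⟩
      rw [Encodable.encode_injective he]
      exact hu
    · intro h
      exact ⟨t, h, rfl⟩
  have hop : ∀ i o, o ≠ .nop → (OpAt P w i o ↔ opOf L i = o) := by
    intro i o ho
    simp only [OpAt, hlab, opOf]
    constructor
    · rintro ⟨t, _, h2, h3⟩
      simp [h2, h3]
    · intro h
      cases hi : L[i]? with
      | none => rw [hi] at h; exact absurd h.symm ho
      | some t =>
        rw [hi] at h
        exact ⟨t, hmem i t hi, rfl, h⟩
  have hdec : ∀ c i, OpAt P w i (.dec c) ↔ opOf L i = .dec c := fun c i => hop i _ (by simp)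
  have hinc : ∀ c i, OpAt P w i (.inc c) ↔ opOf L i = .inc c := fun c i => hop i _ (by simp)
  have hzero : ∀ c i, OpAt P w i (.zero c) ↔ opOf L i = .zero c := fun c i => hop i _ (by simp)
  have hdata := word_of_run (opOf L) s hs0 hs
  refine ⟨w, ?_⟩
  rw [fAll, sat_and, sat_fGlob, sat_fIn]
  refine ⟨⟨?_, ?_, ?_, ?_⟩, ?_, ?_, ?_⟩
  · intro i t _ u _ h1 h2
    rw [hlab] at h1 h2
    rw [h1] at h2
    exact Option.some.inj h2
  · intro c j
    simp only [hdec, hinc]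
    exact (hdata c).1 j
  · intro c i
    simp only [hdec, hinc, hzero]
    exact (hdata c).2 i
  · intro i t _ hne hi
    simp only [hlab] at hi ⊢
    have hin : n ≤ i := by
      by_contra hlt
      rw [hL0 i (by omega)] at hi
      cases hi
      simp [tau0] at hne
    obtain ⟨j, rfl⟩ := Nat.exists_eq_add_of_le hin
    rw [hL1] at hi
    have e : n + j + 1 = n + (j + 1) := by omega
    rw [e, hL1, List.getElem?_cons_succ]
    cases j with
    | zero =>
      simp only [List.getElem?_cons_zero, Option.some.injEq] at hi
      subst hi
      obtain ⟨u, h1, h2, h3⟩ := hl.first (by simp)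
      exact ⟨u, h1, h3, h2⟩
    | succ j =>
      rw [List.getElem?_cons_succ] at hi
      obtain ⟨u, h1, h2, h3⟩ := hl.next rfl j t hi hne
      exact ⟨u, h1, h3, h2⟩
  · intro k hk
    rw [hlab, Nat.zero_add]
    exact hL0 k hk
  · rw [hlab, Nat.zero_add]
    simpa using hL1 0
  · obtain ⟨j, t, h1, h2, h3⟩ := hl.last rfl (by simp)
    refine ⟨n + (j + 1), by omega, t, h2, h3, ?_⟩
    rw [hlab, hL1, List.getElem?_cons_succ]
    exact h1

theorem encode_land (φ ψ : LFormula) : encodeL (land φ ψ) =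
    Nat.pair 1 (Nat.pair 2 (Nat.pair (Nat.pair 1 (encodeL φ)) (Nat.pair 1 (encodeL ψ)))) := rfl

theorem primrec_land {f g : ℕ → ℕ} (hf : Primrec f) (hg : Primrec g) : Primrec fun n =>
    Nat.pair 1 (Nat.pair 2 (Nat.pair (Nat.pair 1 (f n)) (Nat.pair 1 (g n)))) :=
  Primrec₂.natPair.comp (Primrec.const 1) (Primrec₂.natPair.comp (Primrec.const 2)
    (Primrec₂.natPair.comp (Primrec₂.natPair.comp (Primrec.const 1) hf)
      (Primrec₂.natPair.comp (Primrec.const 1) hg)))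

theorem computable_fAll (P : W) : Computable fun n => encodeL (fAll P n) := by
  have h1 : Primrec fun n => encodeL (fIn P n) := by
    have hstep : Primrec fun m : ℕ => Nat.pair 1 (Nat.pair 2
        (Nat.pair (Nat.pair 1 (encodeL (at' tau0))) (Nat.pair 1 (Nat.pair 3 m)))) :=
      primrec_land (Primrec.const _) (Primrec₂.natPair.comp (Primrec.const 3) Primrec.id)
    refine (Primrec.nat_rec₁ (encodeL (fIn P 0))
      (hstep.comp₂ Primrec₂.right)).of_eq fun n => ?_
    induction n with
    | zero => rfl
    | succ n ih =>
      simp only [fIn, encode_land] at ih ⊢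
      rw [encodeL, ← ih]
  exact (primrec_land (Primrec.const _) h1).to_comp

/-- Satisfiability of `L`-formulas over infinite 1-attributed words is
undecidable: no computable function (on Gödel codes) decides it. -/
theorem undecidable_satisfiability_infinite :
    ¬ ∃ f : ℕ → Bool, Computable f ∧
      ∀ φ : LFormula, (f (encodeL φ) = true ↔ Satisfiable φ) := by
  rintro ⟨f, hf, hff⟩
  obtain ⟨P, hP⟩ := exists_program
  refine hP ⟨fun n => f (encodeL (fAll P n)), hf.comp (computable_fAll P), fun n => ?_⟩
  rw [hff]
  exact ⟨exec_of_sat, fun ⟨_, h⟩ => sat_of_exec h⟩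

end Stmt1
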